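/- arXiv:2208.11299 — 2 statements merged into one kernel-verified Lean document; each statement's English description precedes it below -/
import Mathlib

section
/- Let m ≥ 3 be an integer and A > 0. For u ∈ (0,A), let P_u be the probability measure on (0, A−u) with density z ↦ (m−1)(A−u−z)^{m−2}/(A−u)^{m−1} with respect to Lebesgue measure. Then for all x, x' ∈ (0,A) with x ≠ x', the total variation distance satisfies d_TV(P_x, P_{x'}) = |x−x'|^{m−1} / |(A−x)^{(m−1)/(m−2)} − (A−x')^{(m−1)/(m−2)}|^{m−2}, and consequently d_TV(P_x, P_{x'}) ≤ ((m−2)/(m−1))^{m−2} · |x−x'| / (A − max(x,x')). -/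
open MeasureTheory

/-- The probability measure on `(0, A−u)` with density
`z ↦ (m−1)(A−u−z)^{m−2}/(A−u)^{m−1}` with respect to Lebesgue measure: the
one-coordinate conditional distribution arising from the uniform distribution on the
corner of the `n`-cube. -/
noncomputable def cornerCond (m : ℕ) (A u : ℝ) : Measure ℝ :=
  (volume.restrict (Set.Ioo (0 : ℝ) (A - u))).withDensity fun z =>
    ENNReal.ofReal (((m : ℝ) - 1) * (A - u - z) ^ (m - 2) / (A - u) ^ (m - 1))

/-- The total variation distance between two measures: the supremum over measurable
sets of the absolute difference of the probabilities they assign. -/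
noncomputable def tvDist {α : Type*} [MeasurableSpace α] (P Q : Measure α) : ℝ :=
  sSup { r : ℝ | ∃ B : Set α, MeasurableSet B ∧ r = |(P B).toReal - (Q B).toReal| }

noncomputable def ccDens (k : ℕ) (a z : ℝ) : ℝ :=
  (Set.Ioo (0 : ℝ) a).indicator (fun z => ((k : ℝ) + 1) * (a - z) ^ k / a ^ (k + 1)) z

lemma ccDens_nonneg (k : ℕ) (a z : ℝ) (ha : 0 < a) : 0 ≤ ccDens k a z := by
  unfold ccDens
  apply Set.indicator_nonneg
  intro y hy
  have : 0 ≤ a - y := by linarith [hy.2]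
  positivity

lemma ccPoly_continuous (k : ℕ) (a : ℝ) :
    Continuous (fun z : ℝ => ((k : ℝ) + 1) * (a - z) ^ k / a ^ (k + 1)) := by
  fun_prop

lemma ccDens_integrable (k : ℕ) (a : ℝ) : Integrable (ccDens k a) := by
  have h : IntegrableOn (fun z : ℝ => ((k : ℝ) + 1) * (a - z) ^ k / a ^ (k + 1))
      (Set.Ioo (0 : ℝ) a) :=
    ((ccPoly_continuous k a).continuousOn.integrableOn_compact isCompact_Icc).mono_set
      Set.Ioo_subset_Icc_self
  exact (integrable_indicator_iff measurableSet_Ioo).2 h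

lemma ccDens_interval (k : ℕ) (a t : ℝ) (ha : 0 < a) :
    ∫ z in (0:ℝ)..t, ((k : ℝ) + 1) * (a - z) ^ k / a ^ (k + 1) = 1 - ((a - t) / a) ^ (k + 1) := by
  have hd : ∀ z ∈ Set.uIcc 0 t, HasDerivAt (fun z : ℝ => - ((a - z) / a) ^ (k + 1))
      (((k : ℝ) + 1) * (a - z) ^ k / a ^ (k + 1)) z := by
    intro z _
    have h1 : HasDerivAt (fun z : ℝ => (a - z) / a) (-1 / a) z :=
      ((hasDerivAt_id z).const_sub a).div_const a
    have h2 : HasDerivAt (fun z : ℝ => - ((a - z) / a) ^ (k + 1))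
        (-(((k + 1 : ℕ) : ℝ) * ((a - z) / a) ^ k * (-1 / a))) z := (h1.pow (k + 1)).neg
    have e : ((k : ℝ) + 1) * (a - z) ^ k / a ^ (k + 1)
        = -(((k + 1 : ℕ) : ℝ) * ((a - z) / a) ^ k * (-1 / a)) := by
      rw [div_pow]
      push_cast
      field_simp
      ring
    rw [e]
    exact h2
  rw [intervalIntegral.integral_eq_sub_of_hasDerivAt hd
    ((ccPoly_continuous k a).intervalIntegrable _ _)]
  have : a ≠ 0 := ha.ne'
  simp [this]
  ring

lemma ccDens_cdf (k : ℕ) (a t : ℝ) (ha : 0 < a) (ht : 0 ≤ t) (hta : t < a) :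
    ∫ z in Set.Iic t, ccDens k a z = 1 - ((a - t) / a) ^ (k + 1) := by
  rw [← ccDens_interval k a t ha, intervalIntegral.integral_of_le ht]
  unfold ccDens
  rw [setIntegral_indicator measurableSet_Ioo]
  congr 2
  ext z
  simp only [Set.mem_inter_iff, Set.mem_Iic, Set.mem_Ioo, Set.mem_Ioc]
  constructor
  · rintro ⟨h1, h2, h3⟩; exact ⟨h2, h1⟩
  · rintro ⟨h1, h2⟩; exact ⟨h2, h1, by linarith⟩

lemma ccDens_total (k : ℕ) (a : ℝ) (ha : 0 < a) : ∫ z, ccDens k a z = 1 := by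
  unfold ccDens
  rw [integral_indicator measurableSet_Ioo, ← integral_Ioc_eq_integral_Ioo,
    ← intervalIntegral.integral_of_le ha.le, ccDens_interval k a a ha]
  simp

lemma cornerCond_apply (k : ℕ) (A u : ℝ) (hu : u < A) (B : Set ℝ) (hB : MeasurableSet B) :
    ((cornerCond (k + 2) A u) B).toReal = ∫ z in B, ccDens k (A - u) z := by
  have ha : 0 < A - u := by linarith
  rw [integral_eq_lintegral_of_nonneg_ae
    (Filter.Eventually.of_forall fun z => ccDens_nonneg k _ z ha)
    (ccDens_integrable k _).aestronglyMeasurable.restrict]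
  congr 1
  unfold cornerCond
  rw [withDensity_apply _ hB, Measure.restrict_restrict hB, Set.inter_comm,
    ← Measure.restrict_restrict measurableSet_Ioo, ← lintegral_indicator measurableSet_Ioo]
  congr 1
  ext z
  unfold ccDens
  by_cases hz : z ∈ Set.Ioo 0 (A - u)
  · simp only [Set.indicator_of_mem hz]
    congr 1
    push_cast
    ring
  · simp [Set.indicator_of_notMem hz]

lemma tvDist_comm' {α : Type*} [MeasurableSpace α] (P Q : Measure α) :
    tvDist P Q = tvDist Q P := by
  unfold tvDist
  simp only [abs_sub_comm]

/-- total variation when `g` changes sign at `t`. -/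
lemma tv_of_sign (f g : ℝ → ℝ) (hf : Integrable f) (hg : Integrable g)
    (heq : ∫ z, f z = ∫ z, g z) (t : ℝ) (h1 : ∀ z ≤ t, g z ≤ f z) (h2 : ∀ z, t < z → f z ≤ g z)
    (B : Set ℝ) (hB : MeasurableSet B) :
    |(∫ z in B, f z) - ∫ z in B, g z| ≤ (∫ z in Set.Iic t, f z) - ∫ z in Set.Iic t, g z := by
  have key : ∀ C : Set ℝ, MeasurableSet C →
      (∫ z in C, f z) - ∫ z in C, g z ≤ (∫ z in Set.Iic t, f z) - ∫ z in Set.Iic t, g z := by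
    intro C hC
    rw [← integral_sub hf.integrableOn hg.integrableOn,
      ← integral_sub hf.integrableOn hg.integrableOn,
      ← integral_indicator hC, ← integral_indicator measurableSet_Iic]
    apply integral_mono ((hf.sub hg).indicator hC) ((hf.sub hg).indicator measurableSet_Iic)
    intro z
    by_cases hz : z ≤ t
    · have := h1 z hz
      by_cases hzC : z ∈ C <;> simp [Set.indicator, hz, hzC, this]
    · have := h2 z (not_le.1 hz)
      by_cases hzC : z ∈ C <;> simp [Set.indicator, hz, hzC, this]
  rw [abs_le]
  refine ⟨?_, key B hB⟩
  have h := key Bᶜ hB.compl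
  have e1 := integral_add_compl hB hf
  have e2 := integral_add_compl hB hg
  linarith

lemma cc_main (k : ℕ) (hk : 1 ≤ k) (A x x' : ℝ) (hx : x < x') (hx' : x' < A) :
    tvDist (cornerCond (k + 2) A x') (cornerCond (k + 2) A x) =
      (x' - x) ^ (k + 1) / ((A - x) ^ (((k : ℝ) + 1) / k) - (A - x') ^ (((k : ℝ) + 1) / k)) ^ k := by
  have hb : 0 < A - x' := by linarith
  have hba : A - x' < A - x := by linarith
  have hxe : x' - x = (A - x) - (A - x') := by ring
  have app' := cornerCond_apply k A x' hx'
  have app := cornerCond_apply k A x (hx.trans hx')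
  rw [hxe]
  generalize A - x = a at *
  generalize A - x' = b at *
  have ha : 0 < a := hb.trans hba
  have hk0 : (0 : ℝ) < k := by exact_mod_cast hk
  have hpk : ∀ c : ℝ, 0 < c → (c ^ (((k : ℝ) + 1) / k)) ^ k = c ^ (k + 1) := by
    intro c hc
    rw [← Real.rpow_natCast, ← Real.rpow_mul hc.le, ← Real.rpow_natCast c]
    congr 1
    field_simp
    push_cast; ring
  have hp1 : 1 < ((k : ℝ) + 1) / k := by rw [lt_div_iff₀ hk0]; linarith
  obtain ⟨α, hα⟩ : ∃ α, α = a ^ (((k : ℝ) + 1) / k) := ⟨_, rfl⟩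
  obtain ⟨β, hβ⟩ : ∃ β, β = b ^ (((k : ℝ) + 1) / k) := ⟨_, rfl⟩
  have hα0 : 0 < α := hα ▸ Real.rpow_pos_of_pos ha _
  have hβ0 : 0 < β := hβ ▸ Real.rpow_pos_of_pos hb _
  have hαk : α ^ k = a ^ (k + 1) := hα ▸ hpk a ha
  have hβk : β ^ k = b ^ (k + 1) := hβ ▸ hpk b hb
  have hlt : β < α := by
    rw [hα, hβ]; exact Real.rpow_lt_rpow hb.le hba (by linarith)
  have hr : β * a < α * b := by
    have e : ∀ c : ℝ, 0 < c → c ^ (((k : ℝ) + 1) / k) = c ^ (((k : ℝ) + 1) / k - 1) * c := by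
      intro c hc
      rw [← Real.rpow_add_one hc.ne']; congr 1; ring
    have h3 : b ^ (((k : ℝ) + 1) / k - 1) < a ^ (((k : ℝ) + 1) / k - 1) :=
      Real.rpow_lt_rpow hb.le hba (by linarith)
    rw [hα, hβ, e a ha, e b hb]
    have : 0 < b * a := by positivity
    nlinarith
  rw [← hα, ← hβ]
  have hd : 0 < α - β := by linarith
  obtain ⟨t, ht⟩ : ∃ t, t = (α * b - β * a) / (α - β) := ⟨_, rfl⟩
  have hat : a - t = α * ((a - b) / (α - β)) := by rw [ht]; field_simp; ring
  have hbt : b - t = β * ((a - b) / (α - β)) := by rw [ht]; field_simp; ring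
  have hq : 0 < (a - b) / (α - β) := div_pos (by linarith) hd
  have ht0 : 0 < t := ht ▸ div_pos (by linarith) hd
  have htb : t < b := by
    have : 0 < b - t := hbt ▸ mul_pos hβ0 hq
    linarith
  -- comparison of the densities
  have hsign1 : ∀ z ≤ t, ccDens k a z ≤ ccDens k b z := by
    intro z hz
    unfold ccDens
    by_cases h0 : 0 < z
    · rw [Set.indicator_of_mem (show z ∈ Set.Ioo 0 a from ⟨h0, by linarith⟩),
        Set.indicator_of_mem (show z ∈ Set.Ioo 0 b from ⟨h0, by linarith⟩)]
      rw [← hαk, ← hβk, mul_div_assoc, mul_div_assoc, ← div_pow, ← div_pow]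
      have : (a - z) / α ≤ (b - z) / β := by
        rw [div_le_div_iff₀ hα0 hβ0]
        have : (a - t) * β = (b - t) * α := by rw [hat, hbt]; ring
        nlinarith
      have h5 : 0 ≤ (a - z) / α := div_nonneg (by linarith) hα0.le
      gcongr
    · rw [Set.indicator_of_notMem (fun h => h0 h.1), Set.indicator_of_notMem (fun h => h0 h.1)]
  have hsign2 : ∀ z, t < z → ccDens k b z ≤ ccDens k a z := by
    intro z hz
    by_cases h0 : z < b
    · unfold ccDens
      rw [Set.indicator_of_mem (show z ∈ Set.Ioo 0 a from ⟨by linarith, by linarith⟩),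
        Set.indicator_of_mem (show z ∈ Set.Ioo 0 b from ⟨by linarith, by linarith⟩)]
      rw [← hαk, ← hβk, mul_div_assoc, mul_div_assoc, ← div_pow, ← div_pow]
      have : (b - z) / β ≤ (a - z) / α := by
        rw [div_le_div_iff₀ hβ0 hα0]
        have : (a - t) * β = (b - t) * α := by rw [hat, hbt]; ring
        nlinarith
      have h5 : 0 ≤ (b - z) / β := div_nonneg (by linarith) hβ0.le
      gcongr
    · have : ccDens k b z = 0 := Set.indicator_of_notMem (fun h => h0 h.2) _
      rw [this]
      exact ccDens_nonneg k a z ha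
  have hval : (∫ z in Set.Iic t, ccDens k b z) - ∫ z in Set.Iic t, ccDens k a z
      = (a - b) ^ (k + 1) / (α - β) ^ k := by
    rw [ccDens_cdf k a t ha ht0.le (by linarith), ccDens_cdf k b t hb ht0.le htb,
      div_pow, div_pow, ← hαk, ← hβk, hat, hbt, mul_pow, mul_pow, div_pow]
    field_simp
    ring
  have hbound := tv_of_sign (ccDens k b) (ccDens k a) (ccDens_integrable k b)
    (ccDens_integrable k a) (by rw [ccDens_total k b hb, ccDens_total k a ha]) t hsign1 hsign2
  rw [hval] at hbound
  have hgr : IsGreatest { r : ℝ | ∃ B : Set ℝ, MeasurableSet B ∧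
      r = |((cornerCond (k + 2) A x') B).toReal - ((cornerCond (k + 2) A x) B).toReal| }
      ((a - b) ^ (k + 1) / (α - β) ^ k) := by
    constructor
    · refine ⟨Set.Iic t, measurableSet_Iic, ?_⟩
      rw [app _ measurableSet_Iic, app' _ measurableSet_Iic, hval, abs_of_nonneg]
      have : 0 < a - b := by linarith
      positivity
    · rintro r ⟨B, hB, rfl⟩
      rw [app _ hB, app' _ hB]
      exact hbound B hB
  exact hgr.csSup_eq

lemma cc_bound (k : ℕ) (hk : 1 ≤ k) (a b : ℝ) (hb : 0 < b) (hba : b < a) :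
    (a - b) ^ (k + 1) / (a ^ (((k : ℝ) + 1) / k) - b ^ (((k : ℝ) + 1) / k)) ^ k
      ≤ ((k : ℝ) / (k + 1)) ^ k * (a - b) / b := by
  have hk0 : (0 : ℝ) < k := by exact_mod_cast hk
  have hp1 : 1 < ((k : ℝ) + 1) / k := by rw [lt_div_iff₀ hk0]; linarith
  have hab : 0 < a - b := by linarith
  -- tangent line inequality
  have htan : ((k : ℝ) + 1) / k * (b ^ ((1 : ℝ) / k)) * (a - b) ≤
      a ^ (((k : ℝ) + 1) / k) - b ^ (((k : ℝ) + 1) / k) := by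
    have h := one_add_mul_self_le_rpow_one_add (s := a / b - 1)
      (by have : 0 < a / b := div_pos (by linarith) hb
          linarith) hp1.le
    rw [add_sub_cancel, Real.div_rpow (by linarith) hb.le,
      le_div_iff₀ (Real.rpow_pos_of_pos hb _)] at h
    have e : b ^ (((k : ℝ) + 1) / k) = b ^ ((1 : ℝ) / k) * b := by
      rw [← Real.rpow_add_one hb.ne']; congr 1; field_simp; ring
    rw [e] at h ⊢
    have : (1 + ((k : ℝ) + 1) / k * (a / b - 1)) * (b ^ ((1 : ℝ) / k) * b) =
      b ^ ((1 : ℝ) / k) * b + ((k : ℝ) + 1) / k * (b ^ ((1 : ℝ) / k)) * (a - b) := by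
      field_simp
    linarith
  have hbk : (b ^ ((1 : ℝ) / k)) ^ k = b := by
    rw [← Real.rpow_natCast, ← Real.rpow_mul hb.le]
    rw [one_div, inv_mul_cancel₀ hk0.ne', Real.rpow_one]
  have hpos : 0 < b ^ ((1 : ℝ) / k) := Real.rpow_pos_of_pos hb _
  calc _ ≤ (a - b) ^ (k + 1) / (((k : ℝ) + 1) / k * (b ^ ((1 : ℝ) / k)) * (a - b)) ^ k := by
        gcongr
    _ = _ := by
        rw [mul_pow, mul_pow, hbk, div_pow, div_pow]
        field_simp
        ring

/-- **Total variation distance between the one-coordinate conditionals of the corner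
of the cube.**  For `m ≥ 3`, `A > 0` and `x ≠ x'` in `(0,A)`,
`d_TV(P_x, P_{x'}) = |x−x'|^{m−1} / |(A−x)^{(m−1)/(m−2)} − (A−x')^{(m−1)/(m−2)}|^{m−2}`,
and consequently
`d_TV(P_x, P_{x'}) ≤ ((m−2)/(m−1))^{m−2}·|x−x'|/(A − max(x,x'))`. -/
theorem tvDist_cornerCond
    (m : ℕ) (hm : 3 ≤ m) (A : ℝ) (hA : 0 < A)
    (x x' : ℝ) (hx : x ∈ Set.Ioo 0 A) (hx' : x' ∈ Set.Ioo 0 A) (hxx : x ≠ x') :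
    tvDist (cornerCond m A x) (cornerCond m A x') =
      |x - x'| ^ (m - 1) /
        |(A - x) ^ (((m : ℝ) - 1) / ((m : ℝ) - 2)) -
          (A - x') ^ (((m : ℝ) - 1) / ((m : ℝ) - 2))| ^ (m - 2) ∧
    tvDist (cornerCond m A x) (cornerCond m A x') ≤
      (((m : ℝ) - 2) / ((m : ℝ) - 1)) ^ (m - 2) * |x - x'| / (A - max x x') := by
  obtain ⟨k, rfl⟩ : ∃ k, m = k + 2 := ⟨m - 2, by omega⟩
  have hk : 1 ≤ k := by omega
  have e1 : ((k + 2 : ℕ) : ℝ) - 1 = k + 1 := by push_cast; ring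
  have e2 : ((k + 2 : ℕ) : ℝ) - 2 = k := by push_cast; ring
  have e3 : k + 2 - 1 = k + 1 := by omega
  have e4 : k + 2 - 2 = k := by omega
  rw [e1, e2, e3, e4]
  have hp0 : (0 : ℝ) ≤ ((k : ℝ) + 1) / k := by positivity
  rcases lt_or_gt_of_ne hxx with h | h
  · have hm := cc_main k hk A x x' h hx'.2
    have hb := cc_bound k hk (A - x) (A - x') (by linarith [hx'.2]) (by linarith)
    have hle := Real.rpow_le_rpow (by linarith [hx'.2]) (show A - x' ≤ A - x by linarith) hp0
    have hs : A - x - (A - x') = x' - x := by ring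
    rw [tvDist_comm', hm, abs_sub_comm x x', abs_of_pos (show 0 < x' - x by linarith),
      abs_of_nonneg (sub_nonneg.2 hle), max_eq_right h.le]
    rw [hs] at hb
    exact ⟨rfl, hb⟩
  · have hm := cc_main k hk A x' x h hx.2
    have hb := cc_bound k hk (A - x') (A - x) (by linarith [hx.2]) (by linarith)
    have hle := Real.rpow_le_rpow (by linarith [hx.2]) (show A - x ≤ A - x' by linarith) hp0
    have hs : A - x' - (A - x) = x - x' := by ring
    rw [hm, abs_of_pos (show 0 < x - x' by linarith), abs_sub_comm ((A - x) ^ _),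
      abs_of_nonneg (sub_nonneg.2 hle), max_eq_left h.le]
    rw [hs] at hb
    exact ⟨rfl, hb⟩
end

section
/- Let m ≥ 3 be an integer and A > 0, and let X be a random variable with density t ↦ (m−1)(1−t)^{m−2} on (0,1). For x, x' ∈ (0,A), consider the coupling ((A−x)X, (A−x')X) of the measures P_x and P_{x'} (where P_u is the probability measure on (0,A−u) with density z ↦ (m−1)(A−u−z)^{m−2}/(A−u)^{m−1}). Then, with d(u,v) = |u−v|/(A − max(u,v)) for u, v ∈ (0,A), one has E[ d((A−x)X, (A−x')X) ] ≤ d(x,x')/(m−2). -/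
open MeasureTheory

lemma corner_aux (k : ℕ) :
    (∫ t in (0:ℝ)..1, t * (1 - t) ^ k) = 1 / (k + 1 : ℝ) - 1 / (k + 2 : ℝ) := by
  have h1 : (k + 1 : ℝ) ≠ 0 := by positivity
  have h2 : (k + 2 : ℝ) ≠ 0 := by positivity
  rw [intervalIntegral.integral_eq_sub_of_hasDerivAt
    (f := fun t : ℝ => -((1 - t) ^ (k + 1) / (k + 1 : ℝ)) + (1 - t) ^ (k + 2) / (k + 2 : ℝ))]
  · simp
    ring
  · intro t _
    have h0 : HasDerivAt (fun t : ℝ => 1 - t) (-1) t := by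
      simpa using (hasDerivAt_id t).const_sub 1
    have h := ((h0.pow (k + 1)).div_const (k + 1 : ℝ)).neg.add
      ((h0.pow (k + 2)).div_const (k + 2 : ℝ))
    refine h.congr_deriv ?_
    push_cast
    field_simp
    ring
  · exact (by fun_prop : Continuous fun t : ℝ => t * (1 - t) ^ k).intervalIntegrable _ _

/-- **Contraction of the multiplicative coupling for the corner of the cube.**
Let `m ≥ 3`, `A > 0`, and let `X` have density `t ↦ (m−1)(1−t)^{m−2}` on `(0,1)`.
For `x, x' ∈ (0,A)`, the coupling `((A−x)X, (A−x')X)` of `P_x` and `P_{x'}`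
satisfies, with `d(u,v) = |u−v|/(A − max(u,v))`,
`E[d((A−x)X, (A−x')X)] ≤ d(x,x')/(m−2)`. -/
theorem corner_coupling_contraction
    (m : ℕ) (hm : 3 ≤ m) (A : ℝ) (hA : 0 < A)
    (x x' : ℝ) (hx : x ∈ Set.Ioo 0 A) (hx' : x' ∈ Set.Ioo 0 A) :
    (∫ t in Set.Ioo (0 : ℝ) 1,
        (|(A - x) * t - (A - x') * t| /
            (A - max ((A - x) * t) ((A - x') * t))) *
          (((m : ℝ) - 1) * (1 - t) ^ (m - 2))) ≤
      (|x - x'| / (A - max x x')) / ((m : ℝ) - 2) := by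
  obtain ⟨k, rfl⟩ : ∃ k, m = k + 3 := ⟨m - 3, by omega⟩
  obtain ⟨hx0, hxA⟩ := hx
  obtain ⟨hx0', hxA'⟩ := hx'
  have hM : 0 < A - max x x' := sub_pos.2 (max_lt hxA hxA')
  have hM0 : 0 < max x x' := lt_max_of_lt_left hx0
  set D := |x - x'| / (A - max x x') with hD
  have hcont : Continuous fun t : ℝ => D * ((k : ℝ) + 2) * (t * (1 - t) ^ k) := by fun_prop
  have hden : ∀ t ∈ Set.Ioo (0 : ℝ) 1,
      (A - max x x') * (1 - t) ≤ A - max ((A - x) * t) ((A - x') * t) := by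
    rintro t ⟨h0, h1⟩
    have : max ((A - x) * t) ((A - x') * t) ≤ A * t := by
      apply max_le <;> nlinarith
    nlinarith
  have key : ∀ t ∈ Set.Ioo (0 : ℝ) 1,
      (|(A - x) * t - (A - x') * t| / (A - max ((A - x) * t) ((A - x') * t))) *
        ((((k + 3 : ℕ) : ℝ) - 1) * (1 - t) ^ (k + 3 - 2)) ≤
      D * ((k : ℝ) + 2) * (t * (1 - t) ^ k) := by
    intro t ht
    have hd := hden t ht
    obtain ⟨h0, h1⟩ := ht
    have h1t : 0 < 1 - t := by linarith
    have hp : 0 < (A - max x x') * (1 - t) := mul_pos hM h1t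
    have habs : |(A - x) * t - (A - x') * t| = |x - x'| * t := by
      rw [← sub_mul, abs_mul, abs_of_pos h0, abs_sub_comm x x']
      congr 2
      ring
    have hc : (((k + 3 : ℕ) : ℝ) - 1) = (k : ℝ) + 2 := by push_cast; ring
    rw [habs, hc, show k + 3 - 2 = k + 1 from rfl]
    calc _ ≤ (|x - x'| * t / ((A - max x x') * (1 - t))) *
          (((k : ℝ) + 2) * (1 - t) ^ (k + 1)) := by gcongr
      _ = _ := by
        rw [hD]
        field_simp
        ring
  have hle := integral_mono_of_nonneg (μ := volume.restrict (Set.Ioo (0 : ℝ) 1))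
    (f := fun t => (|(A - x) * t - (A - x') * t| / (A - max ((A - x) * t) ((A - x') * t))) *
        ((((k + 3 : ℕ) : ℝ) - 1) * (1 - t) ^ (k + 3 - 2)))
    (g := fun t => D * ((k : ℝ) + 2) * (t * (1 - t) ^ k)) ?_ ?_ ?_
  · refine hle.trans (le_of_eq ?_)
    rw [← integral_Ioc_eq_integral_Ioo, ← intervalIntegral.integral_of_le zero_le_one,
      intervalIntegral.integral_const_mul, corner_aux]
    have h1 : (k + 1 : ℝ) ≠ 0 := by positivity
    have h2 : (k + 2 : ℝ) ≠ 0 := by positivity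
    have h3 : (((k + 3 : ℕ) : ℝ) - 2) = k + 1 := by push_cast; ring
    rw [h3]
    field_simp
    ring
  · refine (ae_restrict_iff' measurableSet_Ioo).2 (Filter.Eventually.of_forall fun t ht => ?_)
    have hd := hden t ht
    have h1t : 0 < 1 - t := by linarith [ht.2]
    have hp : 0 < (A - max x x') * (1 - t) := mul_pos hM h1t
    have hc : (0 : ℝ) ≤ (((k + 3 : ℕ) : ℝ) - 1) := by push_cast; linarith [k.cast_nonneg (α := ℝ)]
    exact mul_nonneg (div_nonneg (abs_nonneg _) (hp.le.trans hd)) (mul_nonneg hc (pow_nonneg h1t.le _))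
  · exact (hcont.integrableOn_Icc (a := 0) (b := 1)).mono_set Set.Ioo_subset_Icc_self
  · exact (ae_restrict_iff' measurableSet_Ioo).2 (Filter.Eventually.of_forall key)
end
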